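/- Let M be a compact metric space, p ∈ M and δ > 0, and let f_δ = dist_p + δ ∈ C_b(M, ℝ) (i.e., the function z ↦ dist(p, z) + δ). Then ‖f_δ − dist_p‖_∞ = δ, and for every q ∈ M one has ‖f_δ − dist_q‖_∞ = δ + dist(p, q). Consequently Φ(p) is the unique nearest point to f_δ in Φ(M). -/

import Mathlib

/-! By the triangle inequality `dist_p - dist_q` takes values in `[-dist p q, dist p q]`, and it
attains the upper endpoint at `q` and the lower one at `p`. After adding a constant `δ`, the sup
norm is therefore `|δ| + dist p q`, attained at `q` if `0 ≤ δ` and at `p` if `δ ≤ 0`; as a function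
of `q` it is smallest exactly when `q = p`. -/

open Metric BoundedContinuousFunction

/-- The Kuratowski embedding of a compact metric space `M` into `C_b(M, ℝ)`. -/
noncomputable def distFun (M : Type*) [MetricSpace M] [CompactSpace M] (p : M) :
    BoundedContinuousFunction M ℝ :=
  .mkOfCompact ⟨fun z => dist p z, by fun_prop⟩

/-- A Kuratowski map into `C_b(M, ℝ)`, for a space that may be unbounded: the values of `Φ` need not
be the distance functions themselves, which may fail to be bounded, but only have the same
differences. An example is `Φ p = dist_p - dist_x₀` for a fixed base point `x₀`. -/
def IsKuratowskiMap {M : Type*} [PseudoMetricSpace M] (Φ : M → M →ᵇ ℝ) : Prop :=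
  ∀ p q z, Φ p z - Φ q z = dist p z - dist q z

theorem isKuratowskiMap_distFun (M : Type*) [MetricSpace M] [CompactSpace M] :
    IsKuratowskiMap (distFun M) :=
  fun _ _ _ => rfl

namespace IsKuratowskiMap

variable {M : Type*} [PseudoMetricSpace M] {Φ : M → M →ᵇ ℝ}

theorem add_const_sub_apply (hΦ : IsKuratowskiMap Φ) (p q : M) (δ : ℝ) (z : M) :
    (Φ p + const M δ - Φ q) z = δ + (dist p z - dist q z) := by
  rw [← hΦ p q z,
    BoundedContinuousFunction.sub_apply, BoundedContinuousFunction.add_apply, const_apply]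
  ring

theorem norm_add_const_sub_le (hΦ : IsKuratowskiMap Φ) (p q : M) (δ : ℝ) :
    ‖Φ p + const M δ - Φ q‖ ≤ |δ| + dist p q := by
  refine (norm_le (by positivity)).2 fun z => ?_
  calc ‖(Φ p + const M δ - Φ q) z‖
      = |δ + (dist p z - dist q z)| := by rw [hΦ.add_const_sub_apply, Real.norm_eq_abs]
    _ ≤ |δ| + |dist p z - dist q z| := abs_add_le _ _
    _ ≤ |δ| + dist p q := by gcongr; exact abs_dist_sub_le p q z

theorem le_norm_add_const_sub (hΦ : IsKuratowskiMap Φ) (p q : M) (δ : ℝ) :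
    |δ| + dist p q ≤ ‖Φ p + const M δ - Φ q‖ := by
  have abs_le_norm (z : M) : |δ + (dist p z - dist q z)| ≤ ‖Φ p + const M δ - Φ q‖ := by
    simpa only [hΦ.add_const_sub_apply, Real.norm_eq_abs] using
      (Φ p + const M δ - Φ q).norm_coe_le_norm z
  rcases le_total 0 δ with hδ | hδ
  · calc |δ| + dist p q = δ + (dist p q - dist q q) := by rw [abs_of_nonneg hδ, dist_self, sub_zero]
      _ ≤ |δ + (dist p q - dist q q)| := le_abs_self _
      _ ≤ _ := abs_le_norm q
  · calc |δ| + dist p q = -(δ + (dist p p - dist q p)) := by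
          rw [abs_of_nonpos hδ, dist_self, dist_comm q p]
          ring
      _ ≤ |δ + (dist p p - dist q p)| := neg_le_abs _
      _ ≤ _ := abs_le_norm p

theorem norm_add_const_sub (hΦ : IsKuratowskiMap Φ) (p q : M) (δ : ℝ) :
    ‖Φ p + const M δ - Φ q‖ = |δ| + dist p q :=
  (hΦ.norm_add_const_sub_le p q δ).antisymm (hΦ.le_norm_add_const_sub p q δ)

theorem norm_add_const_sub_self (hΦ : IsKuratowskiMap Φ) (p : M) (δ : ℝ) :
    ‖Φ p + const M δ - Φ p‖ = |δ| := by
  rw [hΦ.norm_add_const_sub, dist_self, add_zero]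

end IsKuratowskiMap

theorem translated_distFun_unique_nearest_general {M : Type*} [MetricSpace M] {Φ : M → M →ᵇ ℝ}
    (hΦ : IsKuratowskiMap Φ) (p : M) (δ : ℝ) :
    ‖Φ p + const M δ - Φ p‖ = |δ| ∧
      (∀ q : M, ‖Φ p + const M δ - Φ q‖ = |δ| + dist p q) ∧
      (∀ q : M, q ≠ p → ‖Φ p + const M δ - Φ p‖ < ‖Φ p + const M δ - Φ q‖) := by
  refine ⟨hΦ.norm_add_const_sub_self p δ, fun q => hΦ.norm_add_const_sub p q δ, fun q hq => ?_⟩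
  rw [hΦ.norm_add_const_sub_self, hΦ.norm_add_const_sub]
  exact lt_add_of_pos_right _ (dist_pos.2 hq.symm)

/-- For `f_δ = dist_p + δ` one has `‖f_δ − dist_p‖ = δ`,
`‖f_δ − dist_q‖ = δ + dist p q` for every `q`, and `Φ(p)` is the unique nearest
point to `f_δ` in `Φ(M)`. -/
theorem translated_distFun_unique_nearest {M : Type*} [MetricSpace M] [CompactSpace M]
    (p : M) (δ : ℝ) (hδ : 0 < δ) (fδ : BoundedContinuousFunction M ℝ)
    (hf : fδ = distFun M p + BoundedContinuousFunction.const M δ) :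
    ‖fδ - distFun M p‖ = δ ∧
      (∀ q : M, ‖fδ - distFun M q‖ = δ + dist p q) ∧
      (∀ q : M, q ≠ p → ‖fδ - distFun M p‖ < ‖fδ - distFun M q‖) := by
  simpa only [hf, abs_of_pos hδ] using
    translated_distFun_unique_nearest_general (isKuratowskiMap_distFun M) p δ
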